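/- Let q be a real stable polynomial in the variables z₁,…,z_n whose degree in the variable z_i is at most 4, let z ∈ ℝ^n be above the roots of q, and suppose Φ_q^i(z) > 0. Set δ := 9/(4Φ_q^i(z)). Then for every j ∈ {1,…,n}: (q·∂_j∂_i³q − (∂_j q)·(∂_i³q))(z) ≤ δ·(q·∂_j∂_i⁴q − (∂_j q)·(∂_i⁴q))(z); equivalently, ∂_j(∂_i³q/q)(z) ≤ δ·∂_j(∂_i⁴q/q)(z) as derivatives of rational functions evaluated at z. -/

import Mathlib

open Polynomial

/-- A polynomial with real coefficients is real stable if it has no zero all of whose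
coordinates have strictly positive imaginary part. -/
def RealStable {n : ℕ} (p : MvPolynomial (Fin n) ℝ) : Prop :=
  ∀ z : Fin n → ℂ, (∀ k, 0 < (z k).im) → MvPolynomial.aeval z p ≠ 0

/-- `z ∈ ℝ^n` is above the roots of `p` if `p` does not vanish on the nonnegative orthant
based at `z`. -/
def AboveRoots {n : ℕ} (p : MvPolynomial (Fin n) ℝ) (z : Fin n → ℝ) : Prop :=
  ∀ t : Fin n → ℝ, (∀ k, 0 ≤ t k) → MvPolynomial.eval (z + t) p ≠ 0

/-- The barrier function `Φ_p^i(z) = (∂ᵢp)(z)/p(z)`. -/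
noncomputable def Phi {n : ℕ} (p : MvPolynomial (Fin n) ℝ) (i : Fin n) (z : Fin n → ℝ) : ℝ :=
  MvPolynomial.eval z (MvPolynomial.pderiv i p) / MvPolynomial.eval z p

/-- growth bound for polynomials without zeros in the upper half plane -/
lemma growth_bound (g : ℂ[X]) (hg : ∀ x : ℂ, 0 < x.im → g.eval x ≠ 0) (x x0 : ℂ)
    (h0 : 0 < x0.im) (d : ℕ) (hd : g.natDegree ≤ d) :
    ‖g.eval x‖ ≤ (1 + ‖x - x0‖ / x0.im) ^ d * ‖g.eval x0‖ := by
  have hs := IsAlgClosed.splits g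
  have hg0 : g ≠ 0 := by
    rintro rfl
    exact hg x0 h0 (by simp)
  have key : ∀ s : Multiset ℂ, (∀ a ∈ s, a.im ≤ 0) →
      ‖(s.map (fun a => x - a)).prod‖ ≤
        (1 + ‖x - x0‖ / x0.im) ^ (Multiset.card s) * ‖(s.map (fun a => x0 - a)).prod‖ := by
    intro s
    induction s using Multiset.induction_on with
    | empty => intro _; simp
    | cons a s ih =>
      intro h
      have ih' := ih (fun b hb => h b (Multiset.mem_cons_of_mem hb))
      have ha := h a (Multiset.mem_cons_self a s)
      simp only [Multiset.map_cons, Multiset.prod_cons, norm_mul, Multiset.card_cons, pow_succ]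
      have h1 : x0.im ≤ ‖x0 - a‖ := by
        have := Complex.abs_im_le_norm (x0 - a)
        have h2 := le_abs_self (x0 - a).im
        simp only [Complex.sub_im] at this h2
        linarith
      have h3 : ‖x - a‖ ≤ (1 + ‖x - x0‖ / x0.im) * ‖x0 - a‖ := by
        have : ‖x - a‖ ≤ ‖x - x0‖ + ‖x0 - a‖ := by
          have := norm_add_le (x - x0) (x0 - a)
          simpa using this
        have h4 : ‖x - x0‖ ≤ ‖x - x0‖ / x0.im * ‖x0 - a‖ := by
          rw [div_mul_eq_mul_div, le_div_iff₀ h0]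
          gcongr
        linarith
      calc _ ≤ ((1 + ‖x - x0‖ / x0.im) * ‖x0 - a‖) * ((1 + ‖x - x0‖ / x0.im) ^ (Multiset.card s) * ‖(s.map (fun a => x0 - a)).prod‖) := by
            gcongr
        _ = _ := by ring
  have hroots : ∀ a ∈ g.roots, a.im ≤ 0 := by
    intro a ha
    by_contra hh
    exact hg a (not_le.mp hh) (by simpa using (Polynomial.mem_roots hg0).mp ha)
  have := key g.roots hroots
  rw [hs.eval_eq_prod_roots x, hs.eval_eq_prod_roots x0, norm_mul, norm_mul]
  have hc : Multiset.card g.roots ≤ d := le_trans (Polynomial.card_roots' g) hd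
  have h1 : (1:ℝ) ≤ 1 + ‖x - x0‖ / x0.im := by
    have : 0 ≤ ‖x - x0‖ / x0.im := by positivity
    linarith
  calc _ ≤ ‖g.leadingCoeff‖ * ((1 + ‖x - x0‖ / x0.im) ^ d * ‖(g.roots.map (fun a => x0 - a)).prod‖) := by
        gcongr
        refine this.trans ?_
        gcongr
    _ = _ := by ring

/-- logarithmic derivative has nonpositive imaginary part -/
lemma im_logderiv (g : ℂ[X]) (hg : ∀ a : ℂ, 0 < a.im → g.eval a ≠ 0) (y : ℂ) (hy : 0 ≤ y.im) :
    (g.derivative.eval y * (starRingEnd ℂ) (g.eval y)).im ≤ 0 := by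
  have hs := IsAlgClosed.splits g
  have hg0 : g ≠ 0 := by
    rintro rfl
    exact hg Complex.I (by simp) (by simp)
  have key : ∀ s : Multiset ℂ, (∀ a ∈ s, a.im ≤ 0) →
      (((s.map (fun a => X - C a)).prod).derivative.eval y *
        (starRingEnd ℂ) (((s.map (fun a => X - C a)).prod).eval y)).im ≤ 0 := by
    intro s
    induction s using Multiset.induction_on with
    | empty => intro _; simp
    | cons a s ih =>
      intro h
      have ih' := ih (fun b hb => h b (Multiset.mem_cons_of_mem hb))
      have ha := h a (Multiset.mem_cons_self a s)
      simp only [Multiset.map_cons, Multiset.prod_cons]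
      generalize (s.map (fun a => X - C a)).prod = p at ih'
      simp only [derivative_mul, derivative_sub, derivative_X, derivative_C, eval_add, eval_mul,
        eval_sub, eval_X, eval_C, map_mul, map_sub, sub_zero, one_mul, eval_one]
      generalize p.derivative.eval y = u at ih'
      generalize p.eval y = v at ih'
      have e : ((v + (y - a) * u) * (((starRingEnd ℂ) y - (starRingEnd ℂ) a) * (starRingEnd ℂ) v)).im
         = Complex.normSq v * (a.im - y.im) + Complex.normSq (y - a) * (u * (starRingEnd ℂ) v).im := by
        simp [Complex.normSq_apply]
        ring
      rw [e]
      have h1 := Complex.normSq_nonneg v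
      have h2 := Complex.normSq_nonneg (y - a)
      nlinarith
  have hroots : ∀ a ∈ g.roots, a.im ≤ 0 := by
    intro a ha
    by_contra hh
    exact hg a (not_le.mp hh) (by simpa using (Polynomial.mem_roots hg0).mp ha)
  have := key g.roots hroots
  rw [hs.eq_prod_roots]
  generalize (g.roots.map (fun a => X - C a)).prod = p at this
  simp only [derivative_C_mul, eval_mul, eval_C, map_mul]
  generalize p.derivative.eval y = u at this
  generalize p.eval y = v at this
  generalize g.leadingCoeff = c
  have e : (c * u * ((starRingEnd ℂ) c * (starRingEnd ℂ) v)).im =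
      Complex.normSq c * (u * (starRingEnd ℂ) v).im := by
    simp [Complex.normSq_apply]
    ring
  rw [e]
  have h1 := Complex.normSq_nonneg c
  nlinarith

/-- restriction to a complex line -/
noncomputable def lineP {n : ℕ} (w : Fin n → ℂ) (j : Fin n) :
    MvPolynomial (Fin n) ℝ →ₐ[ℝ] ℂ[X] :=
  MvPolynomial.aeval (fun k => C (w k) + if k = j then X else 0)

lemma lineP_eval {n : ℕ} (w : Fin n → ℂ) (j : Fin n) (q : MvPolynomial (Fin n) ℝ) (y : ℂ) :
    (lineP w j q).eval y = MvPolynomial.aeval (fun k => w k + if k = j then y else 0) q := by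
  induction q using MvPolynomial.induction_on with
  | C a => simp [lineP]
  | add p q hp hq => simp only [map_add, eval_add, hp, hq]
  | mul_X p k hp =>
    simp only [map_mul, eval_mul, hp]
    congr 1
    simp only [lineP, MvPolynomial.aeval_X]
    split_ifs <;> simp

lemma lineP_derivative {n : ℕ} (w : Fin n → ℂ) (j : Fin n) (q : MvPolynomial (Fin n) ℝ) :
    (lineP w j q).derivative = lineP w j (MvPolynomial.pderiv j q) := by
  induction q using MvPolynomial.induction_on with
  | C a =>
    simp only [lineP, MvPolynomial.aeval_C, MvPolynomial.pderiv_C, map_zero]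
    exact derivative_C
  | add p q hp hq => simp only [map_add, hp, hq]
  | mul_X p k hp =>
    simp only [map_mul, derivative_mul, hp, MvPolynomial.pderiv_mul, map_add]
    have hk : (lineP w j (MvPolynomial.X k)).derivative =
        lineP w j (MvPolynomial.pderiv j (MvPolynomial.X k)) := by
      by_cases h : k = j
      · subst h; simp [lineP]
      · simp [lineP, h, MvPolynomial.pderiv_X_of_ne h]
    rw [hk]

lemma lineP_natDegree {n : ℕ} (w : Fin n → ℂ) (j : Fin n) (q : MvPolynomial (Fin n) ℝ) :
    (lineP w j q).natDegree ≤ MvPolynomial.degreeOf j q := by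
  unfold lineP
  rw [MvPolynomial.aeval_def, MvPolynomial.eval₂_eq]
  apply natDegree_sum_le_of_forall_le
  intro m hm
  refine le_trans ?_ (MvPolynomial.monomial_le_degreeOf j hm)
  change (C (algebraMap ℝ ℂ _) * _).natDegree ≤ _
  refine (natDegree_C_mul_le _ _).trans ?_
  refine (natDegree_prod_le _ _).trans ?_
  calc _ ≤ ∑ i ∈ m.support, if i = j then m i else 0 := by
        apply Finset.sum_le_sum
        intro k _
        refine natDegree_pow_le.trans ?_
        split_ifs with h
        · have : (C (w k) + X : ℂ[X]).natDegree ≤ 1 := by compute_degree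
          nlinarith
        · simp
    _ ≤ _ := by
        rw [Finset.sum_ite_eq']
        split_ifs <;> simp

lemma degreeOf_pderiv_le' {n : ℕ} (i j : Fin n) (q : MvPolynomial (Fin n) ℝ) :
    MvPolynomial.degreeOf i (MvPolynomial.pderiv j q) ≤ MvPolynomial.degreeOf i q := by
  rw [MvPolynomial.degreeOf_eq_sup]
  apply Finset.sup_le
  intro m hm
  rw [MvPolynomial.mem_support_iff, MvPolynomial.coeff_pderiv] at hm
  have : m + Finsupp.single j 1 ∈ q.support := by
    rw [MvPolynomial.mem_support_iff]
    intro h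
    simp [h] at hm
  have := MvPolynomial.monomial_le_degreeOf i this
  simp only [Finsupp.add_apply] at this
  omega

lemma pderiv_comm' {n : ℕ} (i j : Fin n) (q : MvPolynomial (Fin n) ℝ) :
    MvPolynomial.pderiv i (MvPolynomial.pderiv j q) =
    MvPolynomial.pderiv j (MvPolynomial.pderiv i q) := by
  ext m
  by_cases h : i = j
  · rw [h]
  · simp only [MvPolynomial.coeff_pderiv]
    rw [add_right_comm]
    simp [h, Ne.symm h, Finsupp.single_apply]
    ring

lemma restrict_ne_zero {n : ℕ} (q : MvPolynomial (Fin n) ℝ) (hq : RealStable q)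
    (z : Fin n → ℝ) (h0 : MvPolynomial.eval z q ≠ 0) (i : Fin n) (x : ℂ) (hx : 0 < x.im) :
    MvPolynomial.aeval (fun k => (z k : ℂ) + if k = i then x else 0) q ≠ 0 := by
  intro hcon
  apply h0
  have hb : ∀ ε : ℝ, 0 < ε →
      ‖MvPolynomial.aeval (fun k => (z k : ℂ) + ε * Complex.I + if k = i then (0:ℂ) else 0) q‖ ≤
      (1 + ‖0 - x‖ / x.im) ^ (MvPolynomial.degreeOf i q) *
      ‖MvPolynomial.aeval (fun k => (z k : ℂ) + ε * Complex.I + if k = i then x else 0) q‖ := by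
    intro ε hε
    have := growth_bound (lineP (fun k => (z k : ℂ) + ε * Complex.I) i q) ?_ 0 x hx _
      (lineP_natDegree _ i q)
    · simpa only [lineP_eval] using this
    · intro y hy
      rw [lineP_eval]
      apply hq
      intro k
      split_ifs <;> simp <;> linarith
  have hc : ∀ y : ℂ, Continuous (fun ε : ℝ =>
      ‖MvPolynomial.aeval (fun k => (z k : ℂ) + ε * Complex.I + if k = i then y else 0) q‖) := by
    intro y
    apply Continuous.norm
    have : (fun ε : ℝ => MvPolynomial.aeval (fun k => (z k : ℂ) + ε * Complex.I + if k = i then y else 0) q)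
       = (fun w : Fin n → ℂ => MvPolynomial.eval w (MvPolynomial.map (algebraMap ℝ ℂ) q)) ∘
          (fun ε : ℝ => (fun k => (z k : ℂ) + ε * Complex.I + if k = i then y else 0)) := by
      funext ε
      simp [MvPolynomial.aeval_def, MvPolynomial.eval_map]
    rw [this]
    apply (MvPolynomial.continuous_eval _).comp
    fun_prop
  have hl := le_of_tendsto_of_tendsto (b := nhdsWithin (0:ℝ) (Set.Ioi 0))
    ((hc 0).continuousAt.tendsto.mono_left nhdsWithin_le_nhds)
    ((((hc x).const_mul ((1 + ‖0 - x‖ / x.im) ^ (MvPolynomial.degreeOf i q)))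
      ).continuousAt.tendsto.mono_left nhdsWithin_le_nhds)
    (by filter_upwards [self_mem_nhdsWithin] with ε hε using hb ε hε)
  simp only [Complex.ofReal_zero, zero_mul, add_zero, hcon, norm_zero, mul_zero, ite_self] at hl
  have h1 : MvPolynomial.aeval (fun k => (z k : ℂ)) q = 0 := norm_le_zero_iff.mp hl
  have h2 : MvPolynomial.aeval (fun k => (z k : ℂ)) q = ((MvPolynomial.eval z q : ℝ) : ℂ) :=
    MvPolynomial.aeval_algebraMap_apply ℂ z q
  rw [h2] at h1
  exact_mod_cast h1

lemma restrict_im {n : ℕ} (q : MvPolynomial (Fin n) ℝ) (hq : RealStable q)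
    (z : Fin n → ℝ) (i j : Fin n) (x : ℂ) (hx : 0 < x.im) :
    (MvPolynomial.aeval (fun k => (z k : ℂ) + if k = i then x else 0) (MvPolynomial.pderiv j q) *
     (starRingEnd ℂ) (MvPolynomial.aeval (fun k => (z k : ℂ) + if k = i then x else 0) q)).im ≤ 0 := by
  have hb : ∀ ε : ℝ, 0 < ε →
    (MvPolynomial.aeval (fun k => (z k : ℂ) + ε * Complex.I + if k = i then x else 0) (MvPolynomial.pderiv j q) *
     (starRingEnd ℂ) (MvPolynomial.aeval (fun k => (z k : ℂ) + ε * Complex.I + if k = i then x else 0) q)).im ≤ 0 := by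
    intro ε hε
    have := im_logderiv (lineP (fun k => (z k : ℂ) + ε * Complex.I + if k = i then x else 0) j q) ?_ 0
      (by simp)
    · simpa only [lineP_eval, lineP_derivative, ite_self, add_zero] using this
    · intro y hy
      rw [lineP_eval]
      apply hq
      intro k
      split_ifs <;> simp <;> linarith
  have hc : ∀ q : MvPolynomial (Fin n) ℝ, Continuous (fun ε : ℝ =>
      MvPolynomial.aeval (fun k => (z k : ℂ) + ε * Complex.I + if k = i then x else 0) q) := by
    intro q
    have : (fun ε : ℝ => MvPolynomial.aeval (fun k => (z k : ℂ) + ε * Complex.I + if k = i then x else 0) q)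
       = (fun w : Fin n → ℂ => MvPolynomial.eval w (MvPolynomial.map (algebraMap ℝ ℂ) q)) ∘
          (fun ε : ℝ => (fun k => (z k : ℂ) + ε * Complex.I + if k = i then x else 0)) := by
      funext ε
      simp [MvPolynomial.aeval_def, MvPolynomial.eval_map]
    rw [this]
    apply (MvPolynomial.continuous_eval _).comp
    fun_prop
  have hcc := Complex.continuous_im.comp
    ((hc (MvPolynomial.pderiv j q)).mul (Complex.continuous_conj.comp (hc q)))
  have hl := le_of_tendsto (b := (0:ℝ)) (x := nhdsWithin (0:ℝ) (Set.Ioi 0))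
    (hcc.continuousAt.tendsto.mono_left nhdsWithin_le_nhds)
    (by filter_upwards [self_mem_nhdsWithin] with ε hε using hb ε hε)
  simpa using hl

lemma line_expand {n : ℕ} (q : MvPolynomial (Fin n) ℝ) (i : Fin n)
    (hdeg : MvPolynomial.degreeOf i q ≤ 4) (z : Fin n → ℝ) (x : ℂ) :
    MvPolynomial.aeval (fun k => (z k : ℂ) + if k = i then x else 0) q =
    (MvPolynomial.eval z q : ℂ) + (MvPolynomial.eval z (MvPolynomial.pderiv i q) : ℂ) * x
     + (MvPolynomial.eval z (MvPolynomial.pderiv i (MvPolynomial.pderiv i q)) : ℂ) / 2 * x ^ 2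
     + (MvPolynomial.eval z (MvPolynomial.pderiv i (MvPolynomial.pderiv i (MvPolynomial.pderiv i q))) : ℂ) / 6 * x ^ 3
     + (MvPolynomial.eval z (MvPolynomial.pderiv i (MvPolynomial.pderiv i (MvPolynomial.pderiv i (MvPolynomial.pderiv i q)))) : ℂ) / 24 * x ^ 4 := by
  set w : Fin n → ℂ := fun k => (z k : ℂ) with hw
  have h2 : ∀ p : MvPolynomial (Fin n) ℝ, ((MvPolynomial.eval z p : ℝ) : ℂ) = (lineP w i p).coeff 0 := by
    intro p
    rw [coeff_zero_eq_eval_zero, lineP_eval]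
    simp only [ite_self, add_zero]
    exact (MvPolynomial.aeval_algebraMap_apply ℂ z p).symm
  have h3 := lineP_eval w i q x
  rw [← h3, eval_eq_sum_range' (n := 5) (lt_of_le_of_lt (lineP_natDegree w i q) (by omega))]
  simp only [h2, ← lineP_derivative, coeff_derivative, Finset.sum_range_succ, Finset.sum_range_zero]
  push_cast
  ring

/-- The local behaviour at a pole: it is simple with positive residue. -/
lemma pole_simple (P0 R : ℝ[X]) (a : ℝ) (m : ℕ) (hm : 1 ≤ m) (hP0 : P0.eval a ≠ 0)
    (hR : R.eval a ≠ 0)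
    (hN : ∀ u : ℂ, 0 < u.im →
      (aeval u R * (starRingEnd ℂ) (aeval u ((X - C a) ^ m * P0))).im ≤ 0) :
    m = 1 ∧ 0 < R.eval a / P0.eval a := by
  have key : ∀ ω : ℂ, 0 < ω.im → 0 ≤ R.eval a * P0.eval a * (ω ^ m).im := by
    intro ω hω
    have hb : ∀ ε : ℝ, 0 < ε → (aeval ((a : ℂ) + ε * ω) R *
        (starRingEnd ℂ) (ω ^ m * aeval ((a : ℂ) + ε * ω) P0)).im ≤ 0 := by
      intro ε hε
      have h := hN (a + ε * ω) (by simp; positivity)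
      have e : aeval ((a : ℂ) + ε * ω) ((X - C a) ^ m * P0) =
          ((ε ^ m : ℝ) : ℂ) * (ω ^ m * aeval ((a : ℂ) + ε * ω) P0) := by
        simp [mul_pow]
        ring
      rw [e, map_mul, Complex.conj_ofReal, mul_left_comm, Complex.im_ofReal_mul] at h
      have : 0 < ε ^ m := by positivity
      by_contra hh
      push Not at hh
      nlinarith [mul_pos this hh]
    have hc : ∀ p : ℝ[X], Continuous (fun ε : ℝ => aeval ((a : ℂ) + ε * ω) p) := by
      intro p
      have h1 : Continuous (fun u : ℂ => aeval u p) := Polynomial.continuous_aeval p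
      exact h1.comp (by fun_prop)
    have hcc := Complex.continuous_im.comp
      ((hc R).mul (Complex.continuous_conj.comp ((hc P0).const_mul (ω ^ m))))
    have hl := le_of_tendsto (b := (0:ℝ)) (x := nhdsWithin (0:ℝ) (Set.Ioi 0))
      (hcc.continuousAt.tendsto.mono_left nhdsWithin_le_nhds)
      (by filter_upwards [self_mem_nhdsWithin] with ε hε using hb ε hε)
    have ev : ∀ p : ℝ[X], aeval (a : ℂ) p = ((p.eval a : ℝ) : ℂ) := by
      intro p
      exact Polynomial.aeval_algebraMap_apply_eq_algebraMap_eval a p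
    simp only [Function.comp_apply, Pi.mul_apply, Complex.ofReal_zero, zero_mul, add_zero, ev, map_mul,
      Complex.conj_ofReal] at hl
    rw [Complex.im_ofReal_mul, Complex.im_mul_ofReal, Complex.conj_im] at hl
    linarith
  have hpr : R.eval a * P0.eval a ≠ 0 := mul_ne_zero hR hP0
  have hmpos : (0:ℝ) < m := by exact_mod_cast hm
  have him : ∀ θ : ℝ, 0 < θ → θ < Real.pi → 0 ≤ R.eval a * P0.eval a * Real.sin (m * θ) := by
    intro θ h1 h2
    have := key (Complex.exp (θ * Complex.I)) (by
      rw [Complex.exp_ofReal_mul_I_im]; exact Real.sin_pos_of_pos_of_lt_pi h1 h2)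
    rw [← Complex.exp_nat_mul] at this
    have e : (m : ℂ) * (θ * Complex.I) = ((m * θ : ℝ) : ℂ) * Complex.I := by
      push_cast; ring
    rw [e, Complex.exp_ofReal_mul_I_im] at this
    exact this
  have hpi := Real.pi_pos
  have hpos : 0 < R.eval a * P0.eval a := by
    have := him (Real.pi / (2 * m)) (by positivity) (by
      rw [div_lt_iff₀ (by positivity)]
      have : (1:ℝ) ≤ m := by exact_mod_cast hm
      nlinarith)
    have e : (m:ℝ) * (Real.pi / (2 * m)) = Real.pi / 2 := by field_simp
    rw [e, Real.sin_pi_div_two, mul_one] at this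
    exact lt_of_le_of_ne this hpr.symm
  constructor
  · by_contra hne
    have h2 : (2:ℝ) ≤ m := by exact_mod_cast (by omega : 2 ≤ m)
    have := him (3 * Real.pi / (2 * m)) (by positivity) (by
      rw [div_lt_iff₀ (by positivity)]
      nlinarith)
    have e : (m:ℝ) * (3 * Real.pi / (2 * m)) = Real.pi / 2 + Real.pi := by field_simp; ring
    rw [e, Real.sin_add_pi, Real.sin_pi_div_two] at this
    linarith
  · have : R.eval a / P0.eval a = R.eval a * P0.eval a / (P0.eval a) ^ 2 := by field_simp
    rw [this]
    positivity

lemma partial_fractions {ι : Type*} [DecidableEq ι] (k : ℕ) : ∀ (s : Finset ι) (lam : ι → ℝ) (R : ℝ[X]),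
    s.card = k → R.degree < s.card →
    (∀ u : ℂ, 0 < u.im →
      (aeval u R * (starRingEnd ℂ) (aeval u (∏ l ∈ s, (X - C (lam l))))).im ≤ 0) →
    ∃ v : ι → ℝ, (∀ l, 0 ≤ v l) ∧
      R = ∑ l ∈ s, C (v l) * ∏ m ∈ s.erase l, (X - C (lam m)) := by
  induction k with
  | zero =>
    intro s lam R hs hR _
    refine ⟨fun _ => 0, fun _ => le_rfl, ?_⟩
    rw [hs] at hR
    have : R = 0 := by
      rw [← Polynomial.degree_eq_bot]
      simpa using hR
    simp [this]
  | succ k ih =>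
    intro s lam R hs hR hN
    by_cases hcase : ∃ a ∈ s, R.eval (lam a) = 0
    · obtain ⟨a, ha, hRa⟩ := hcase
      obtain ⟨R1, rfl⟩ := Polynomial.dvd_iff_isRoot.mpr hRa
      have hcard : (s.erase a).card = k := by rw [Finset.card_erase_of_mem ha, hs]; rfl
      have hdeg1 : R1.degree < (s.erase a).card := by
        by_cases h0 : R1 = 0
        · rw [h0, Polynomial.degree_zero]; exact WithBot.bot_lt_coe _
        · rw [hs, degree_mul, degree_X_sub_C, degree_eq_natDegree h0] at hR
          rw [hcard, degree_eq_natDegree h0]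
          norm_cast at hR ⊢
          omega
      have hN1 : ∀ u : ℂ, 0 < u.im → (aeval u R1 *
          (starRingEnd ℂ) (aeval u (∏ l ∈ s.erase a, (X - C (lam l))))).im ≤ 0 := by
        intro u hu
        have h := hN u hu
        rw [← Finset.mul_prod_erase s _ ha] at h
        simp only [map_mul] at h
        set A := aeval u R1
        set B := aeval u (∏ l ∈ s.erase a, (X - C (lam l)))
        set c := aeval u (X - C (lam a)) with hc
        have e : (c * A * ((starRingEnd ℂ) c * (starRingEnd ℂ) B)).im =
            Complex.normSq c * (A * (starRingEnd ℂ) B).im := by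
          simp [Complex.normSq_apply]
          ring
        rw [e] at h
        have hcne : c ≠ 0 := by
          intro h0
          have : c.im = 0 := by rw [h0]; simp
          rw [hc] at this
          simp at this
          linarith
        have := Complex.normSq_pos.mpr hcne
        by_contra hh
        push Not at hh
        nlinarith [mul_pos this hh]
      obtain ⟨v, hv, hRv⟩ := ih (s.erase a) lam R1 hcard hdeg1 hN1
      · refine ⟨fun l => if l = a then 0 else v l, ?_, ?_⟩
        · intro l
          dsimp only
          split_ifs
          · exact le_rfl
          · exact hv l
        · rw [← Finset.add_sum_erase s _ ha]
          simp only [if_true, map_zero, zero_mul, zero_add]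
          conv_lhs => rw [hRv]
          rw [Finset.mul_sum]
          apply Finset.sum_congr rfl
          intro l hl
          have hla : l ≠ a := Finset.ne_of_mem_erase hl
          rw [if_neg hla]
          rw [← Finset.mul_prod_erase (s.erase l) _ (Finset.mem_erase.mpr ⟨hla.symm, ha⟩),
            Finset.erase_right_comm]
          ring
    · push Not at hcase
      have hPne : (∏ l ∈ s, (X - C (lam l)) : ℝ[X]) ≠ 0 :=
        Finset.prod_ne_zero_iff.mpr (fun l _ => X_sub_C_ne_zero _)
      have hpole : ∀ a ∈ s, (∏ l ∈ s.erase a, (X - C (lam l))).eval (lam a) ≠ 0 ∧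
          0 < R.eval (lam a) / (∏ l ∈ s.erase a, (X - C (lam l))).eval (lam a) := by
        intro a ha
        obtain ⟨g, hg, hnd⟩ :=
          Polynomial.exists_eq_pow_rootMultiplicity_mul_and_not_dvd _ hPne (lam a)
        have hg0 : g.eval (lam a) ≠ 0 := fun h => hnd (Polynomial.dvd_iff_isRoot.mpr h)
        have hm : 1 ≤ rootMultiplicity (lam a) (∏ l ∈ s, (X - C (lam l))) := by
          rw [Nat.succ_le_iff, Polynomial.rootMultiplicity_pos hPne, IsRoot, eval_prod]
          exact Finset.prod_eq_zero ha (by simp)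
        generalize rootMultiplicity (lam a) (∏ l ∈ s, (X - C (lam l))) = m at *
        rw [hg] at hN
        obtain ⟨h1, h2⟩ := pole_simple g R (lam a) m hm hg0 (hcase a ha) hN
        rw [h1, pow_one, ← Finset.mul_prod_erase s _ ha] at hg
        have := mul_left_cancel₀ (X_sub_C_ne_zero (lam a)) hg
        rw [this]
        exact ⟨hg0, h2⟩
      have hinj : Set.InjOn lam s := by
        intro a ha b hb hab
        by_contra hne
        apply (hpole a ha).1
        rw [eval_prod]
        exact Finset.prod_eq_zero (i := b) (Finset.mem_erase.mpr ⟨Ne.symm hne, hb⟩) (by simp [hab])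
      refine ⟨fun a => if a ∈ s then R.eval (lam a) / (∏ l ∈ s.erase a, (X - C (lam l))).eval (lam a) else 0,
        ?_, ?_⟩
      · intro l
        dsimp only
        split_ifs with h
        · exact (hpole l h).2.le
        · exact le_rfl
      · have := Lagrange.eq_interpolate hinj hR
        conv_lhs => rw [this]
        rw [Lagrange.interpolate_apply]
        apply Finset.sum_congr rfl
        intro l hl
        beta_reduce
        rw [if_pos hl]
        simp only [Lagrange.basis, Lagrange.basisDivisor]
        rw [Finset.prod_mul_distrib, ← mul_assoc]
        congr 1
        rw [div_eq_mul_inv, C_mul, eval_prod, ← Finset.prod_inv_distrib, map_prod]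
        simp

lemma aeval_ofReal_eq {n : ℕ} (w : Fin n → ℝ) (q : MvPolynomial (Fin n) ℝ) :
    MvPolynomial.aeval (fun k => (w k : ℂ)) q = ((MvPolynomial.eval w q : ℝ) : ℂ) :=
  MvPolynomial.aeval_algebraMap_apply ℂ w q

lemma cubic_coeff_one (α β γ δ : ℝ) :
    (C α * X ^ 3 + C β * X ^ 2 + C γ * X + C δ : ℝ[X]).coeff 1 = γ := by
  simp [coeff_X_pow, coeff_C]

lemma cubic_coeff_zero (α β γ δ : ℝ) :
    (C α * X ^ 3 + C β * X ^ 2 + C γ * X + C δ : ℝ[X]).coeff 0 = δ := by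
  simp

lemma quartic_coeff_three (α β γ δ : ℝ) :
    (X ^ 4 + (C α * X ^ 3 + C β * X ^ 2 + C γ * X + C δ) : ℝ[X]).coeff 3 = α := by
  simp [coeff_X_pow, coeff_X, coeff_C]

set_option maxHeartbeats 2000000 in
/-- The univariate core of the estimate. -/
lemma univariate_core (A0 A1 A2 A3 A4 B0 B1 B2 B3 B4 : ℝ)
    (hUH : ∀ x : ℂ, 0 < x.im →
      (A0 : ℂ) + A1 * x + A2 / 2 * x ^ 2 + A3 / 6 * x ^ 3 + A4 / 24 * x ^ 4 ≠ 0)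
    (hpos : ∀ t : ℝ, 0 ≤ t → A0 + A1 * t + A2 / 2 * t ^ 2 + A3 / 6 * t ^ 3 + A4 / 24 * t ^ 4 ≠ 0)
    (him : ∀ x : ℂ, 0 < x.im →
      (((B0 : ℂ) + B1 * x + B2 / 2 * x ^ 2 + B3 / 6 * x ^ 3 + B4 / 24 * x ^ 4) *
       (starRingEnd ℂ) ((A0 : ℂ) + A1 * x + A2 / 2 * x ^ 2 + A3 / 6 * x ^ 3 + A4 / 24 * x ^ 4)).im ≤ 0)
    (hΦ : 0 < A1 / A0) :
    A0 * B3 - B0 * A3 ≤ 9 / (4 * (A1 / A0)) * (A0 * B4 - B0 * A4) := by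
  have hA0 : A0 ≠ 0 := by simpa using hpos 0 le_rfl
  set P : ℝ[X] := X ^ 4 + (C (-(A1 / A0)) * X ^ 3 + C (A2 / (2 * A0)) * X ^ 2
    + C (-(A3 / (6 * A0))) * X + C (A4 / (24 * A0))) with hP
  have hsmall : (C (-(A1 / A0)) * X ^ 3 + C (A2 / (2 * A0)) * X ^ 2
    + C (-(A3 / (6 * A0))) * X + C (A4 / (24 * A0))).degree < ((4:ℕ) : WithBot ℕ) := by
    refine lt_of_le_of_lt degree_cubic_le ?_
    norm_num
  have hmon : P.Monic := monic_X_pow_add hsmall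
  have hPdeg : P.natDegree = 4 := by
    rw [hP]
    rw [natDegree_add_eq_left_of_degree_lt (by rw [degree_X_pow]; exact hsmall), natDegree_X_pow]
  have hPev : ∀ u : ℂ, u ≠ 0 → aeval u P = u ^ 4 * ((A0 : ℂ) + A1 * (-u⁻¹) + A2 / 2 * (-u⁻¹) ^ 2
      + A3 / 6 * (-u⁻¹) ^ 3 + A4 / 24 * (-u⁻¹) ^ 4) / A0 := by
    intro u hu
    have : (A0 : ℂ) ≠ 0 := by exact_mod_cast hA0
    simp [hP]
    field_simp
    ring
  have hinvim : ∀ u : ℂ, 0 < u.im → 0 < (-u⁻¹).im := by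
    intro u hu
    have hu0 : u ≠ 0 := by rintro rfl; simp at hu
    rw [Complex.neg_im, Complex.inv_im, neg_div, neg_neg]
    exact div_pos hu (Complex.normSq_pos.mpr hu0)
  have hPUH : ∀ u : ℂ, 0 < u.im → aeval u P ≠ 0 := by
    intro u hu
    have hu0 : u ≠ 0 := by rintro rfl; simp at hu
    rw [hPev u hu0]
    have : (A0 : ℂ) ≠ 0 := by exact_mod_cast hA0
    exact div_ne_zero (mul_ne_zero (pow_ne_zero _ hu0) (hUH _ (hinvim u hu))) this
  have hconj : ∀ u : ℂ, aeval ((starRingEnd ℂ) u) P = (starRingEnd ℂ) (aeval u P) := by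
    intro u
    simp only [hP, map_add, map_mul, map_pow, aeval_X, aeval_C, Complex.coe_algebraMap,
      Complex.conj_ofReal]
  have hsplit : P.Splits := by
    apply Splits.of_splits_map (algebraMap ℝ ℂ) (IsAlgClosed.splits _)
    intro u hu
    have hroot : aeval u P = 0 := by
      have := (Polynomial.mem_roots (hmon.map _).ne_zero).mp hu
      rwa [IsRoot, eval_map_algebraMap] at this
    have : u.im = 0 := by
      rcases lt_trichotomy u.im 0 with h | h | h
      · exfalso
        apply hPUH ((starRingEnd ℂ) u) (by simpa using h)
        rw [hconj, hroot, map_zero]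
      · exact h
      · exact absurd hroot (hPUH u h)
    exact ⟨u.re, by apply Complex.ext <;> simp [this]⟩
  have hPevR : ∀ u : ℝ, u ≠ 0 → P.eval u = u ^ 4 * (A0 + A1 * (-u⁻¹) + A2 / 2 * (-u⁻¹) ^ 2
      + A3 / 6 * (-u⁻¹) ^ 3 + A4 / 24 * (-u⁻¹) ^ 4) / A0 := by
    intro u hu
    simp [hP]
    field_simp
    ring
  have hrootpos : ∀ u ∈ P.roots, 0 ≤ u := by
    intro u hu
    by_contra hneg
    push Not at hneg
    have hroot : P.eval u = 0 := (Polynomial.mem_roots hmon.ne_zero).mp hu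
    rw [hPevR u hneg.ne] at hroot
    have h1 : 0 ≤ -u⁻¹ := by
      have := inv_lt_zero.mpr hneg
      linarith
    exact div_ne_zero (mul_ne_zero (pow_ne_zero _ hneg.ne) (hpos _ h1)) hA0 hroot
  have hcard : Multiset.card P.roots = 4 := by rw [← hsplit.natDegree_eq_card_roots, hPdeg]
  obtain ⟨a, b, c, d, hroots⟩ := Multiset.card_eq_four.mp hcard
  have ha : 0 ≤ a := hrootpos a (by simp [hroots])
  have hb : 0 ≤ b := hrootpos b (by simp [hroots])
  have hc : 0 ≤ c := hrootpos c (by simp [hroots])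
  have hd : 0 ≤ d := hrootpos d (by simp [hroots])
  have hPprod : P = (X - C a) * ((X - C b) * ((X - C c) * (X - C d))) := by
    have := hsplit.eq_prod_roots_of_monic hmon
    rw [hroots] at this
    simpa using this
  set R : ℝ[X] := C (-(B1 / A0 - B0 * A1 / A0 ^ 2)) * X ^ 3 + C ((B2 / A0 - B0 * A2 / A0 ^ 2) / 2) * X ^ 2
    + C (-(B3 / A0 - B0 * A3 / A0 ^ 2) / 6) * X + C ((B4 / A0 - B0 * A4 / A0 ^ 2) / 24) with hR
  have hRdeg : R.degree < ((4:ℕ) : WithBot ℕ) := by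
    refine lt_of_le_of_lt degree_cubic_le ?_
    norm_num
  have hRev : ∀ u : ℂ, u ≠ 0 → aeval u R = u ^ 4 * ((B0 : ℂ) + B1 * (-u⁻¹) + B2 / 2 * (-u⁻¹) ^ 2
      + B3 / 6 * (-u⁻¹) ^ 3 + B4 / 24 * (-u⁻¹) ^ 4) / A0 - ((B0 / A0 : ℝ) : ℂ) * aeval u P := by
    intro u hu
    have : (A0 : ℂ) ≠ 0 := by exact_mod_cast hA0
    rw [hPev u hu]
    simp [hR]
    field_simp
    ring
  have hN : ∀ u : ℂ, 0 < u.im → (aeval u R * (starRingEnd ℂ) (aeval u P)).im ≤ 0 := by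
    intro u hu
    have hu0 : u ≠ 0 := by rintro rfl; simp at hu
    have h := him _ (hinvim u hu)
    rw [hRev u hu0, hPev u hu0]
    set S := (B0 : ℂ) + B1 * (-u⁻¹) + B2 / 2 * (-u⁻¹) ^ 2
      + B3 / 6 * (-u⁻¹) ^ 3 + B4 / 24 * (-u⁻¹) ^ 4
    set T := (A0 : ℂ) + A1 * (-u⁻¹) + A2 / 2 * (-u⁻¹) ^ 2
      + A3 / 6 * (-u⁻¹) ^ 3 + A4 / 24 * (-u⁻¹) ^ 4
    have e : (u ^ 4 * S / A0 - ((B0 / A0 : ℝ) : ℂ) * (u ^ 4 * T / A0)) *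
        (starRingEnd ℂ) (u ^ 4 * T / A0) =
        ((Complex.normSq (u ^ 4) / A0 ^ 2 : ℝ) : ℂ) * (S * (starRingEnd ℂ) T) -
        ((B0 / A0 * Complex.normSq (u ^ 4 * T / A0) : ℝ) : ℂ) := by
      have : (A0 : ℂ) ≠ 0 := by exact_mod_cast hA0
      push_cast
      rw [← Complex.mul_conj, ← Complex.mul_conj]
      simp only [map_div₀, map_mul, Complex.conj_ofReal]
      field_simp
    rw [e, Complex.sub_im, Complex.im_ofReal_mul, Complex.ofReal_im, sub_zero]
    exact mul_nonpos_of_nonneg_of_nonpos (div_nonneg (Complex.normSq_nonneg _) (sq_nonneg _)) h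
  obtain ⟨v, hv, hRv⟩ := partial_fractions 4 (Finset.univ : Finset (Fin 4)) ![a, b, c, d] R rfl
    hRdeg (by
      have : (∏ l : Fin 4, (X - C (![a, b, c, d] l)) : ℝ[X]) = P := by
        rw [hPprod]
        simp [Fin.prod_univ_four, mul_assoc]
      rw [this]
      exact hN)
  have e0 : (Finset.univ.erase (0 : Fin 4)) = {1, 2, 3} := by decide
  have e1 : (Finset.univ.erase (1 : Fin 4)) = {0, 2, 3} := by decide
  have e2 : (Finset.univ.erase (2 : Fin 4)) = {0, 1, 3} := by decide
  have e3 : (Finset.univ.erase (3 : Fin 4)) = {0, 1, 2} := by decide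
  have hRv' : R = C (v 0) * ((X - C b) * ((X - C c) * (X - C d)))
      + C (v 1) * ((X - C a) * ((X - C c) * (X - C d)))
      + C (v 2) * ((X - C a) * ((X - C b) * (X - C d)))
      + C (v 3) * ((X - C a) * ((X - C b) * (X - C c))) := by
    rw [hRv, Fin.sum_univ_four, e0, e1, e2, e3]
    simp
  have hv0 := hv 0
  have hv1 := hv 1
  have hv2 := hv 2
  have hv3 := hv 3
  generalize v 0 = p at *
  generalize v 1 = q at *
  generalize v 2 = r at *
  generalize v 3 = s at *
  -- coefficient comparison
  have hRc : R = C (p + q + r + s) * X ^ 3 + C (-(p * (b + c + d) + q * (a + c + d)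
      + r * (a + b + d) + s * (a + b + c))) * X ^ 2
      + C (p * (b*c+b*d+c*d) + q * (a*c+a*d+c*d)
      + r * (a*b+a*d+b*d) + s * (a*b+a*c+b*c)) * X
      + C (-(p * (b*c*d) + q * (a*c*d) + r * (a*b*d) + s * (a*b*c))) := by
    rw [hRv']
    simp only [map_neg, map_mul, map_add]
    ring
  have hsum1 : A1 / A0 = a + b + c + d := by
    have h : P.coeff 3 = -(A1 / A0) := by rw [hP]; exact quartic_coeff_three _ _ _ _
    have h' : P = X ^ 4 + (C (-(a + b + c + d)) * X ^ 3 + C (a*b+a*c+a*d+b*c+b*d+c*d) * X ^ 2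
       + C (-(a*b*c+a*b*d+a*c*d+b*c*d)) * X + C (a*b*c*d)) := by
      rw [hPprod]
      simp only [map_neg, map_mul, map_add]
      ring
    have h2 : P.coeff 3 = -(a + b + c + d) := by
      rw [h']; exact quartic_coeff_three _ _ _ _
    linarith
  have hR1 : -(B3 / A0 - B0 * A3 / A0 ^ 2) / 6 = p * (b*c+b*d+c*d) + q * (a*c+a*d+c*d)
      + r * (a*b+a*d+b*d) + s * (a*b+a*c+b*c) := by
    have h : R.coeff 1 = -(B3 / A0 - B0 * A3 / A0 ^ 2) / 6 := by
      rw [hR]; exact cubic_coeff_one _ _ _ _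
    rw [← h, hRc]
    exact cubic_coeff_one _ _ _ _
  have hR0 : (B4 / A0 - B0 * A4 / A0 ^ 2) / 24 = -(p * (b*c*d) + q * (a*c*d)
      + r * (a*b*d) + s * (a*b*c)) := by
    have h : R.coeff 0 = (B4 / A0 - B0 * A4 / A0 ^ 2) / 24 := by
      rw [hR]; exact cubic_coeff_zero _ _ _ _
    rw [← h, hRc]
    exact cubic_coeff_zero _ _ _ _
  have hL3 : A0 * B3 - B0 * A3 = A0 ^ 2 * (B3 / A0 - B0 * A3 / A0 ^ 2) := by field_simp
  have hL4 : A0 * B4 - B0 * A4 = A0 ^ 2 * (B4 / A0 - B0 * A4 / A0 ^ 2) := by field_simp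
  rw [hL3, hL4, hsum1]
  rw [hsum1] at hΦ
  clear hL3 hL4
  generalize B3 / A0 - B0 * A3 / A0 ^ 2 = U at *
  generalize B4 / A0 - B0 * A4 / A0 ^ 2 = W at *
  have amgm : ∀ x y w t : ℝ, 0 ≤ x → 0 ≤ y → 0 ≤ w → 0 ≤ t →
      9 * (x * y * w) ≤ (t + x + y + w) * (x * y + x * w + y * w) := by
    intro x y w t hx hy hw ht
    nlinarith [mul_nonneg hx (sq_nonneg (y - w)), mul_nonneg hy (sq_nonneg (x - w)),
      mul_nonneg hw (sq_nonneg (x - y)), mul_nonneg ht (mul_nonneg hx hy),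
      mul_nonneg ht (mul_nonneg hx hw), mul_nonneg ht (mul_nonneg hy hw)]
  have k0 := mul_le_mul_of_nonneg_left (amgm b c d a hb hc hd ha) hv0
  have k1 := mul_le_mul_of_nonneg_left (amgm a c d b ha hc hd hb) hv1
  have k2 := mul_le_mul_of_nonneg_left (amgm a b d c ha hb hd hc) hv2
  have k3 := mul_le_mul_of_nonneg_left (amgm a b c d ha hb hc hd) hv3
  have hfin : (a + b + c + d) * U ≤ 9 / 4 * W := by
    have hU : U = -6 * (p * (b*c+b*d+c*d) + q * (a*c+a*d+c*d)
      + r * (a*b+a*d+b*d) + s * (a*b+a*c+b*c)) := by linarith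
    have hW : W = -24 * (p * (b*c*d) + q * (a*c*d) + r * (a*b*d) + s * (a*b*c)) := by linarith
    rw [hU, hW]
    nlinarith [k0, k1, k2, k3]
  have hA2 : 0 < A0 ^ 2 := by positivity
  have hrw : 9 / (4 * (a + b + c + d)) * (A0 ^ 2 * W) = A0 ^ 2 * (9 / 4 * W) / (a + b + c + d) := by
    field_simp
  rw [hrw, le_div_iff₀ hΦ]
  nlinarith [mul_le_mul_of_nonneg_left hfin hA2.le]

/-- Degree-4 barrier estimate: if `q` is real stable of degree at most 4 in `zᵢ`, `z` is
above the roots of `q` and `Φ_q^i(z) > 0`, then with `δ = 9/(4Φ_q^i(z))`, for every `j`: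
`(q ∂_j∂_i³q - (∂_j q)(∂_i³q))(z) ≤ δ (q ∂_j∂_i⁴q - (∂_j q)(∂_i⁴q))(z)`. -/
theorem barrier_estimate_deg_four {n : ℕ} (q : MvPolynomial (Fin n) ℝ) (hq : RealStable q)
    (i : Fin n) (hdeg : MvPolynomial.degreeOf i q ≤ 4)
    (z : Fin n → ℝ) (hz : AboveRoots q z) (hΦ : 0 < Phi q i z) :
    ∀ j : Fin n,
      MvPolynomial.eval z
          (q * MvPolynomial.pderiv j
              (MvPolynomial.pderiv i (MvPolynomial.pderiv i (MvPolynomial.pderiv i q)))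
            - MvPolynomial.pderiv j q *
              MvPolynomial.pderiv i (MvPolynomial.pderiv i (MvPolynomial.pderiv i q)))
        ≤ (9 / (4 * Phi q i z)) *
          MvPolynomial.eval z
            (q * MvPolynomial.pderiv j
                (MvPolynomial.pderiv i (MvPolynomial.pderiv i
                  (MvPolynomial.pderiv i (MvPolynomial.pderiv i q))))
              - MvPolynomial.pderiv j q *
                MvPolynomial.pderiv i (MvPolynomial.pderiv i
                  (MvPolynomial.pderiv i (MvPolynomial.pderiv i q)))) := by
  intro j
  have h0 : MvPolynomial.eval z q ≠ 0 := by
    have := hz 0 (fun _ => le_rfl)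
    simpa using this
  have hdegj : MvPolynomial.degreeOf i (MvPolynomial.pderiv j q) ≤ 4 :=
    (degreeOf_pderiv_le' i j q).trans hdeg
  rw [map_sub, map_mul, map_mul, map_sub, map_mul, map_mul]
  have hc3 : MvPolynomial.pderiv j
        (MvPolynomial.pderiv i (MvPolynomial.pderiv i (MvPolynomial.pderiv i q))) =
      MvPolynomial.pderiv i (MvPolynomial.pderiv i (MvPolynomial.pderiv i
        (MvPolynomial.pderiv j q))) := by
    rw [pderiv_comm' j i, pderiv_comm' j i, pderiv_comm' j i]
  rw [pderiv_comm' j i (MvPolynomial.pderiv i (MvPolynomial.pderiv i (MvPolynomial.pderiv i q))), hc3]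
  refine univariate_core _ _
    (MvPolynomial.eval z (MvPolynomial.pderiv i (MvPolynomial.pderiv i q))) _ _ _
    (MvPolynomial.eval z (MvPolynomial.pderiv i (MvPolynomial.pderiv j q)))
    (MvPolynomial.eval z (MvPolynomial.pderiv i (MvPolynomial.pderiv i (MvPolynomial.pderiv j q))))
    _ _ ?_ ?_ ?_ hΦ
  · intro x hx
    rw [← line_expand q i hdeg z x]
    exact restrict_ne_zero q hq z h0 i x hx
  · intro t ht hcon
    have h1 := line_expand q i hdeg z (t : ℂ)
    have h2 : MvPolynomial.aeval (fun k => (z k : ℂ) + if k = i then (t : ℂ) else 0) q =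
        ((MvPolynomial.eval (z + fun k => if k = i then t else 0) q : ℝ) : ℂ) := by
      have h3 : MvPolynomial.aeval
          (fun k => (((z + fun k => if k = i then t else 0) k : ℝ) : ℂ)) q =
          ((MvPolynomial.eval (z + fun k => if k = i then t else 0) q : ℝ) : ℂ) :=
        aeval_ofReal_eq (z + fun k => if k = i then t else 0) q
      rw [← h3]
      have hf : (fun k => (z k : ℂ) + if k = i then (t : ℂ) else 0) =
          (fun k => (((z + fun k => if k = i then t else 0) k : ℝ) : ℂ)) := by
        funext k
        simp only [Pi.add_apply, Complex.ofReal_add]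
        split_ifs <;> simp
      rw [hf]
    rw [h2] at h1
    refine hz (fun k => if k = i then t else 0) ?_ ?_
    · intro k
      split_ifs
      · exact ht
      · exact le_rfl
    · have h4 := congrArg (fun r : ℝ => (r : ℂ)) hcon
      push_cast at h4
      rw [h4] at h1
      exact Complex.ofReal_eq_zero.mp h1
  · intro x hx
    rw [← line_expand q i hdeg z x, ← line_expand (MvPolynomial.pderiv j q) i hdegj z x]
    exact restrict_im q hq z i j x hx
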